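/- If the defect of commutativity is k = 0 (equivalently ρ = 0), then the annihilator ideal of G equals 𝔄(G) = 𝔯_{m−2,e−1} := (X^{m−2}, Y^{e−1}, XY, T(X,Y)) as ideals of ℤ[X,Y], where T(X,Y) = X² + 3X + 3 + 3Y + Y²; in particular 𝔄(G) is completely independent of the parameters α, β, γ, δ. -/

import Mathlib

/-!
Put `X = x - 1`, `Y = y - 1`, and let `R a b` be the ideal `(X ^ a, Y ^ b, XY, T)` of `ℤ[X, Y]`.
The defining relations with `ρ = 0` say that the generators of `R (m - 2) (e - 1)` kill `s₂`, so
`R (m - 2) (e - 1) ≤ A`. Equality is then a matter of counting.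

* Since `G` is generated by `x` and `y`, the commutator subgroup is generated by the elements
  `s₂ ^ (X ^ i Y ^ j)` (`commutator_le_closure_wIter`), so `Ψ` maps onto it, and `ℤ[X, Y] ⧸ A` has
  at least `|G'| = 3 ^ (n - 2)` elements.
* Multiplying `T` by powers of `X` and `Y` gives `3 X ^ i ∈ (X ^ (i + 1), XY, T)` for `i ≥ 1`, the same for
  `Y`, and `3 ∈ (X, Y, T)`. So each of the `(a - 1) + (b - 1) + 1` steps in the chain from `R a b`
  up to the whole ring has index at most `3`, whence
  `|ℤ[X, Y] ⧸ R a b| ≤ 3 ^ (a + b - 1)` (`card_quotient_relIdeal`).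

With `a = m - 2` and `b = e - 1` one has `a + b - 1 = n - 2`, so the surjection
`ℤ[X, Y] ⧸ R a b → ℤ[X, Y] ⧸ A` is a bijection.
-/

open MvPolynomial

/-- The paper's commutator `[a,b] = a⁻¹ b⁻¹ a b`. -/
def pcomm {G : Type*} [Group G] (a b : G) : G := a⁻¹ * b⁻¹ * a * b

/-- The iterated commutator `s₂^{(x-1)^i (y-1)^j}`, where `s₂ = [y,x]`,
obtained by commutating `i` times with `x` and `j` times with `y`. -/
def wIter {G : Type*} [Group G] (x y : G) (i j : ℕ) : G :=
  (fun t => pcomm t x)^[i] ((fun t => pcomm t y)^[j] (pcomm y x))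

/-- The higher commutators `s₂ = [y,x]`, `s_j = [s_{j-1}, x]` for `j ≥ 3`. -/
def sSeq {G : Type*} [Group G] (x y : G) (j : ℕ) : G :=
  (fun t => pcomm t x)^[j - 2] (pcomm y x)

/-- The higher commutators `t₂ = [y,x]`, `t_j = [t_{j-1}, y]` for `j ≥ 3`. -/
def tSeq {G : Type*} [Group G] (x y : G) (j : ℕ) : G :=
  (fun t => pcomm t y)^[j - 2] (pcomm y x)

/-- `σ₃ = y³`, `σ_j = [σ_{j-1}, x]` for `j ≥ 4`. -/
def sigSeq {G : Type*} [Group G] (x y : G) (j : ℕ) : G :=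
  (fun t => pcomm t x)^[j - 3] (y ^ 3)

/-- `τ₃ = x³`, `τ_j = [τ_{j-1}, y]` for `j ≥ 4`. -/
def tauSeq {G : Type*} [Group G] (x y : G) (j : ℕ) : G :=
  (fun t => pcomm t y)^[j - 3] (x ^ 3)

/-! ### The index of the ideal `(X ^ a, Y ^ b, XY, T)` -/

/-- The ideal `(X ^ a, Y ^ b, XY, T)` of `ℤ[X, Y]`, where `T = X² + 3X + 3 + 3Y + Y²`. -/
noncomputable def relIdeal (a b : ℕ) : Ideal (MvPolynomial (Fin 2) ℤ) :=
  Ideal.span {X 0 ^ a, X 1 ^ b, X 0 * X 1, X 0 ^ 2 + 3 * X 0 + 3 + 3 * X 1 + X 1 ^ 2}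

lemma X_pow_mem_relIdeal (a b : ℕ) : X 0 ^ a ∈ relIdeal a b :=
  Ideal.subset_span (by simp)

lemma Y_pow_mem_relIdeal (a b : ℕ) : X 1 ^ b ∈ relIdeal a b :=
  Ideal.subset_span (by simp)

lemma XY_mem_relIdeal (a b : ℕ) : X 0 * X 1 ∈ relIdeal a b :=
  Ideal.subset_span (by simp)

lemma T_mem_relIdeal (a b : ℕ) :
    X 0 ^ 2 + 3 * X 0 + 3 + 3 * X 1 + X 1 ^ 2 ∈ relIdeal a b :=
  Ideal.subset_span (by simp)

/-- If `X`, `Y` and `3` all send `g` into `I`, then adjoining `g` to `I` has index at most `3`: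
the multiples of `g` are congruent to `0`, `g` or `2g` modulo `I`. -/
lemma card_quotient_le_of_step {I J : Ideal (MvPolynomial (Fin 2) ℤ)} {g : MvPolynomial (Fin 2) ℤ}
    (hJ : J ≤ I ⊔ Ideal.span {g}) (hX : X 0 * g ∈ I) (hY : X 1 * g ∈ I) (h3 : 3 * g ∈ I) {N : ℕ}
    (hf : Finite (MvPolynomial (Fin 2) ℤ ⧸ J))
    (hN : Nat.card (MvPolynomial (Fin 2) ℤ ⧸ J) ≤ 3 ^ N) :
    Finite (MvPolynomial (Fin 2) ℤ ⧸ I) ∧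
      Nat.card (MvPolynomial (Fin 2) ℤ ⧸ I) ≤ 3 ^ (N + 1) := by
  have key : ∀ f : MvPolynomial (Fin 2) ℤ, ∃ c : ℤ, f * g - C c * g ∈ I := by
    intro f
    induction f using MvPolynomial.induction_on with
    | C a => exact ⟨a, by simp⟩
    | add p q hp hq =>
      obtain ⟨c, hc⟩ := hp
      obtain ⟨d, hd⟩ := hq
      refine ⟨c + d, ?_⟩
      have := I.add_mem hc hd
      rw [C_add]
      convert this using 1
      ring
    | mul_X p i _ =>
      refine ⟨0, ?_⟩
      have hi : X i * g ∈ I := by fin_cases i <;> assumption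
      have := I.mul_mem_left p hi
      simpa [mul_assoc] using this
  let φ : (MvPolynomial (Fin 2) ℤ ⧸ J) × Fin 3 → MvPolynomial (Fin 2) ℤ ⧸ I :=
    fun p => Ideal.Quotient.mk I (Quotient.out p.1 + C ((p.2 : ℕ) : ℤ) * g)
  have hφ : Function.Surjective φ := by
    intro q
    obtain ⟨f, rfl⟩ := Ideal.Quotient.mk_surjective q
    have h1 : f - Quotient.out (Ideal.Quotient.mk J f) ∈ J := by
      rw [← Ideal.Quotient.eq]
      exact (Quotient.out_eq (Ideal.Quotient.mk J f)).symm
    obtain ⟨u, hu, v, hv, huv⟩ := Submodule.mem_sup.1 (hJ h1)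
    obtain ⟨w, rfl⟩ := Ideal.mem_span_singleton'.1 hv
    obtain ⟨c, hc⟩ := key w
    have hc3 : 0 ≤ c % 3 := Int.emod_nonneg _ (by norm_num)
    have hc3' : c % 3 < 3 := Int.emod_lt_of_pos _ (by norm_num)
    refine ⟨(Ideal.Quotient.mk J f, ⟨(c % 3).toNat, by omega⟩), ?_⟩
    symm
    simp only [φ]
    rw [Ideal.Quotient.eq, Int.toNat_of_nonneg hc3]
    have e1 : (C c : MvPolynomial (Fin 2) ℤ) = 3 * C (c / 3) + C (c % 3) := by
      conv_lhs => rw [← Int.mul_ediv_add_emod c 3]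
      simp
    have h4 := I.add_mem (I.add_mem hu hc) (I.mul_mem_left (C (c / 3)) h3)
    convert h4 using 1
    rw [e1]
    linear_combination (-1 : MvPolynomial (Fin 2) ℤ) * huv
  refine ⟨Finite.of_surjective φ hφ, (Nat.card_le_card_of_surjective φ hφ).trans ?_⟩
  rw [Nat.card_prod, pow_succ]
  simp only [Nat.card_eq_fintype_card, Fintype.card_fin] at hN ⊢
  exact Nat.mul_le_mul_right 3 hN

lemma relIdeal_one_one : Finite (MvPolynomial (Fin 2) ℤ ⧸ relIdeal 1 1) ∧
    Nat.card (MvPolynomial (Fin 2) ℤ ⧸ relIdeal 1 1) ≤ 3 ^ 1 := by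
  have hx := X_pow_mem_relIdeal 1 1
  have hy := Y_pow_mem_relIdeal 1 1
  rw [pow_one] at hx hy
  refine card_quotient_le_of_step (J := ⊤) (g := 1) (N := 0) ?_ ?_ ?_ ?_ ?_ ?_
  · simp
  · simpa using hx
  · simpa using hy
  · have := (relIdeal 1 1).sub_mem (T_mem_relIdeal 1 1)
      ((relIdeal 1 1).add_mem ((relIdeal 1 1).mul_mem_left (X 0 + 3) hx)
        ((relIdeal 1 1).mul_mem_left (X 1 + 3) hy))
    convert this using 1
    ring
  · have := Ideal.Quotient.subsingleton_iff.2 (rfl : (⊤ : Ideal (MvPolynomial (Fin 2) ℤ)) = ⊤)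
    infer_instance
  · have := Ideal.Quotient.subsingleton_iff.2 (rfl : (⊤ : Ideal (MvPolynomial (Fin 2) ℤ)) = ⊤)
    simp

lemma relIdeal_step_X (a b N : ℕ)
    (h : Finite (MvPolynomial (Fin 2) ℤ ⧸ relIdeal (a + 1) (b + 1)) ∧
      Nat.card (MvPolynomial (Fin 2) ℤ ⧸ relIdeal (a + 1) (b + 1)) ≤ 3 ^ N) :
    Finite (MvPolynomial (Fin 2) ℤ ⧸ relIdeal (a + 2) (b + 1)) ∧
      Nat.card (MvPolynomial (Fin 2) ℤ ⧸ relIdeal (a + 2) (b + 1)) ≤ 3 ^ (N + 1) := by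
  set I := relIdeal (a + 2) (b + 1) with hI
  have hx : X 0 ^ (a + 2) ∈ I := X_pow_mem_relIdeal _ _
  have hxy : X 0 * X 1 ∈ I := XY_mem_relIdeal _ _
  have hT := T_mem_relIdeal (a + 2) (b + 1)
  rw [← hI] at hT
  refine card_quotient_le_of_step (J := relIdeal (a + 1) (b + 1)) (g := X 0 ^ (a + 1))
    ?_ ?_ ?_ ?_ h.1 h.2
  · refine Ideal.span_le.2 ?_
    rintro f (rfl | rfl | rfl | rfl)
    · exact Ideal.mem_sup_right (Ideal.mem_span_singleton_self _)
    · exact Ideal.mem_sup_left (Y_pow_mem_relIdeal _ _)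
    · exact Ideal.mem_sup_left hxy
    · exact Ideal.mem_sup_left hT
  · convert hx using 1
    ring
  · convert I.mul_mem_left (X 0 ^ a) hxy using 1
    ring
  · have := I.sub_mem (I.mul_mem_left (X 0 ^ (a + 1)) hT)
      (I.add_mem (I.mul_mem_left (X 0 + 3) hx) (I.mul_mem_left (X 0 ^ a * (3 + X 1)) hxy))
    convert this using 1
    ring

lemma relIdeal_step_Y (a b N : ℕ)
    (h : Finite (MvPolynomial (Fin 2) ℤ ⧸ relIdeal (a + 1) (b + 1)) ∧
      Nat.card (MvPolynomial (Fin 2) ℤ ⧸ relIdeal (a + 1) (b + 1)) ≤ 3 ^ N) :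
    Finite (MvPolynomial (Fin 2) ℤ ⧸ relIdeal (a + 1) (b + 2)) ∧
      Nat.card (MvPolynomial (Fin 2) ℤ ⧸ relIdeal (a + 1) (b + 2)) ≤ 3 ^ (N + 1) := by
  set I := relIdeal (a + 1) (b + 2) with hI
  have hy : X 1 ^ (b + 2) ∈ I := Y_pow_mem_relIdeal _ _
  have hxy : X 0 * X 1 ∈ I := XY_mem_relIdeal _ _
  have hT := T_mem_relIdeal (a + 1) (b + 2)
  rw [← hI] at hT
  refine card_quotient_le_of_step (J := relIdeal (a + 1) (b + 1)) (g := X 1 ^ (b + 1))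
    ?_ ?_ ?_ ?_ h.1 h.2
  · refine Ideal.span_le.2 ?_
    rintro f (rfl | rfl | rfl | rfl)
    · exact Ideal.mem_sup_left (X_pow_mem_relIdeal _ _)
    · exact Ideal.mem_sup_right (Ideal.mem_span_singleton_self _)
    · exact Ideal.mem_sup_left hxy
    · exact Ideal.mem_sup_left hT
  · convert I.mul_mem_left (X 1 ^ b) hxy using 1
    ring
  · convert hy using 1
    ring
  · have := I.sub_mem (I.mul_mem_left (X 1 ^ (b + 1)) hT)
      (I.add_mem (I.mul_mem_left (X 1 + 3) hy) (I.mul_mem_left (X 1 ^ b * (3 + X 0)) hxy))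
    convert this using 1
    ring

lemma card_quotient_relIdeal (a b : ℕ) :
    Finite (MvPolynomial (Fin 2) ℤ ⧸ relIdeal (a + 1) (b + 1)) ∧
      Nat.card (MvPolynomial (Fin 2) ℤ ⧸ relIdeal (a + 1) (b + 1)) ≤ 3 ^ (a + b + 1) := by
  induction b with
  | zero =>
    induction a with
    | zero => exact relIdeal_one_one
    | succ a ih => exact relIdeal_step_X a 0 _ ih
  | succ b ih => exact relIdeal_step_Y a b _ ih

/-! ### The commutator subgroup is generated by the elements `wIter x y i j` -/

section Metabelian

variable {G : Type*} [Group G]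

lemma pcomm_mem_commutator (a b : G) : pcomm a b ∈ commutator G := by
  have h := Subgroup.commutator_mem_commutator (Subgroup.mem_top a⁻¹) (Subgroup.mem_top b⁻¹)
  rw [commutatorElement_def, inv_inv, inv_inv] at h
  exact h

lemma pcomm_eq_one_iff {a b : G} : pcomm a b = 1 ↔ Commute a b := by
  unfold pcomm
  rw [mul_assoc, ← mul_inv_rev, inv_mul_eq_one]
  exact ⟨fun h => h.symm, fun h => h.symm⟩

/-- On an abelian commutator subgroup, conjugations by `x` and by `y` commute. -/
lemma pcomm_pcomm_comm (habel : ∀ a ∈ commutator G, ∀ b ∈ commutator G, a * b = b * a)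
    (x y : G) {t : G} (ht : t ∈ commutator G) :
    pcomm (pcomm t x) y = pcomm (pcomm t y) x := by
  have hn : (commutator G).Normal := inferInstance
  have conj : ∀ g, g⁻¹ * t * g ∈ commutator G := fun g => by
    simpa using hn.conj_mem t ht g⁻¹
  have h1 : (x * y)⁻¹ * t * (x * y) = (y * x)⁻¹ * t * (y * x) := by
    have h2 : (x * y) * (y * x)⁻¹ ∈ commutator G := by
      have := pcomm_mem_commutator x⁻¹ y⁻¹
      simpa [pcomm, mul_assoc] using this
    have h3 := habel _ ht _ h2
    calc (x * y)⁻¹ * t * (x * y)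
        = (x * y)⁻¹ * (t * (x * y * (y * x)⁻¹)) * (y * x) := by group
      _ = (x * y)⁻¹ * ((x * y * (y * x)⁻¹) * t) * (y * x) := by rw [h3]
      _ = _ := by group
  have h4 := habel _ (conj x) _ ((commutator G).inv_mem (conj y))
  have h5 : (x⁻¹ * t * x)⁻¹ * t * (y⁻¹ * t * y)⁻¹ =
      (y⁻¹ * t * y)⁻¹ * t * (x⁻¹ * t * x)⁻¹ := by
    rw [habel _ ((commutator G).inv_mem (conj x)) t ht, mul_assoc,
      habel _ ((commutator G).inv_mem (conj x)) _ ((commutator G).inv_mem (conj y)), ← mul_assoc,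
      habel t ht _ ((commutator G).inv_mem (conj y))]
  calc pcomm (pcomm t x) y
      = (x⁻¹ * t * x)⁻¹ * t * (y⁻¹ * t * y)⁻¹ * ((x * y)⁻¹ * t * (x * y)) := by
        unfold pcomm; group
    _ = (y⁻¹ * t * y)⁻¹ * t * (x⁻¹ * t * x)⁻¹ * ((y * x)⁻¹ * t * (y * x)) := by rw [h5, h1]
    _ = pcomm (pcomm t y) x := by unfold pcomm; group

lemma wIter_succ_left (x y : G) (i j : ℕ) : wIter x y (i + 1) j = pcomm (wIter x y i j) x := by
  unfold wIter
  rw [Function.iterate_succ_apply']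

lemma wIter_mem_commutator (x y : G) (i j : ℕ) : wIter x y i j ∈ commutator G := by
  cases i with
  | zero =>
    cases j with
    | zero => exact pcomm_mem_commutator _ _
    | succ j =>
      simp only [wIter, Function.iterate_succ_apply', Function.iterate_zero, id]
      exact pcomm_mem_commutator _ _
  | succ i =>
    rw [wIter_succ_left]
    exact pcomm_mem_commutator _ _

lemma wIter_succ_right (habel : ∀ a ∈ commutator G, ∀ b ∈ commutator G, a * b = b * a)
    (x y : G) (i j : ℕ) : wIter x y i (j + 1) = pcomm (wIter x y i j) y := by
  induction i with
  | zero => simp only [wIter, Function.iterate_succ_apply', Function.iterate_zero, id]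
  | succ i ih =>
    rw [wIter_succ_left, ih, wIter_succ_left,
      pcomm_pcomm_comm habel y x (wIter_mem_commutator x y i j)]

/-- The subgroup generated by the `wIter x y i j` is normal, and the images of `x` and `y` in the
quotient by it commute, so it contains the commutator subgroup. -/
lemma commutator_le_closure_wIter [Finite G]
    (habel : ∀ a ∈ commutator G, ∀ b ∈ commutator G, a * b = b * a)
    (x y : G) (hgen : Subgroup.closure ({x, y} : Set G) = ⊤) :
    commutator G ≤ Subgroup.closure (Set.range fun p : ℕ × ℕ => wIter x y p.1 p.2) := by
  set H := Subgroup.closure (Set.range fun p : ℕ × ℕ => wIter x y p.1 p.2) with hH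
  have hw : ∀ i j, wIter x y i j ∈ H := fun i j => Subgroup.subset_closure ⟨(i, j), rfl⟩
  have hconj : ∀ z : G, (∀ i j, pcomm (wIter x y i j) z ∈ H) → z ∈ Subgroup.normalizer H := by
    intro z hz
    have h1 : ∀ t ∈ H, z⁻¹ * t * z ∈ H := by
      intro t ht
      induction ht using Subgroup.closure_induction with
      | mem t ht =>
        obtain ⟨⟨i, j⟩, rfl⟩ := ht
        have := H.mul_mem (hw i j) (hz i j)
        simpa [pcomm, mul_assoc] using this
      | one => simp
      | mul a b _ _ ha hb =>
        have := H.mul_mem ha hb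
        simpa [mul_assoc] using this
      | inv a _ ha =>
        have := H.inv_mem ha
        simpa [mul_assoc] using this
    have h2 : z⁻¹ ∈ Subgroup.normalizer (H : Set G) :=
      Subgroup.mem_normalizer_fintype (fun t ht => by simpa using h1 t ht)
    simpa using inv_mem h2
  have hN : H.Normal := by
    rw [← Subgroup.normalizer_eq_top_iff, eq_top_iff, ← hgen, Subgroup.closure_le]
    rintro z (rfl | rfl)
    · exact hconj _ fun i j => wIter_succ_left z y i j ▸ hw (i + 1) j
    · exact hconj _ fun i j => wIter_succ_right habel x z i j ▸ hw i (j + 1)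
  rw [← Subgroup.Normal.quotient_commutative_iff_commutator_le]
  have hxy : Commute (QuotientGroup.mk' H y) (QuotientGroup.mk' H x) := by
    rw [← pcomm_eq_one_iff]
    exact (QuotientGroup.eq_one_iff _).2 (hw 0 0)
  have htop : Subgroup.closure ({QuotientGroup.mk' H x, QuotientGroup.mk' H y} : Set (G ⧸ H))
      = ⊤ := by
    rw [← Set.image_pair, ← MonoidHom.map_closure, hgen, ← MonoidHom.range_eq_map,
      QuotientGroup.range_mk']
  have hc := Subgroup.isMulCommutative_closure
    (k := ({QuotientGroup.mk' H x, QuotientGroup.mk' H y} : Set (G ⧸ H))) (by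
      rintro a (rfl | rfl) b (rfl | rfl)
      · rfl
      · exact hxy.eq.symm
      · exact hxy.eq
      · rfl)
  rw [htop] at hc
  exact ⟨⟨fun a b => congrArg Subtype.val
    (hc.is_comm.comm (⟨a, Subgroup.mem_top a⟩ : (⊤ : Subgroup (G ⧸ H))) ⟨b, Subgroup.mem_top b⟩)⟩⟩

/-- An element commuting with two generators of the group is central. -/
lemma commute_of_gen {x y c : G} (hgen : Subgroup.closure ({x, y} : Set G) = ⊤)
    (hx : Commute c x) (hy : Commute c y) (z : G) : Commute c z := by
  have h : Subgroup.closure ({x, y} : Set G) ≤ Subgroup.centralizer {c} := by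
    rw [Subgroup.closure_le]
    rintro w (rfl | rfl)
    · exact Subgroup.mem_centralizer_singleton_iff.2 hx.eq.symm
    · exact Subgroup.mem_centralizer_singleton_iff.2 hy.eq.symm
  rw [hgen] at h
  exact (Subgroup.mem_centralizer_singleton_iff.1 (h (Subgroup.mem_top z))).symm

end Metabelian

/-! ### Comparison of the two ideals -/

theorem annihilator_defect_zero
    {G : Type*} [Group G] [Finite G]
    (m n e k : ℕ) (x y : G) (α β γ δ ρ : ℤ)
    (hm : 4 ≤ m) (hmn : m < n) (hn2m : n ≤ 2 * m - 3) (he : e = n - m + 2) (he3 : 3 ≤ e)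
    (hk : k ≤ 1) (hkrho : k = 0 ↔ ρ = 0)
    (hα : α = -1 ∨ α = 0 ∨ α = 1) (hβ : β = -1 ∨ β = 0 ∨ β = 1)
    (hγ : γ = -1 ∨ γ = 0 ∨ γ = 1) (hδ : δ = -1 ∨ δ = 0 ∨ δ = 1)
    (hρ : ρ = -1 ∨ ρ = 0 ∨ ρ = 1)
    (hcard : Nat.card G = 3 ^ n)
    (hab : Nat.card (G ⧸ commutator G) = 9)
    (habel : ∀ a ∈ commutator G, ∀ b ∈ commutator G, a * b = b * a)
    (hgen : Subgroup.closure ({x, y} : Set G) = ⊤)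
    (hR1s : ∀ i, 3 ≤ i → sSeq x y i ^ 3 * sSeq x y (i + 1) ^ 3 * sSeq x y (i + 2) = 1)
    (hR1t : ∀ i, 3 ≤ i → tSeq x y i ^ 3 * tSeq x y (i + 1) ^ 3 * tSeq x y (i + 2) = 1)
    (hR2sig : ∀ j, 3 ≤ j → sigSeq x y j ^ 3 * sigSeq x y (j + 1) ^ 3 * sigSeq x y (j + 2) = 1)
    (hR2tau : ∀ j, 3 ≤ j → tauSeq x y j ^ 3 * tauSeq x y (j + 1) ^ 3 * tauSeq x y (j + 2) = 1)
    (hR3s : sSeq x y 2 ^ 3 * sSeq x y 3 ^ 3 * sSeq x y 4 = (tauSeq x y 4)⁻¹)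
    (hR3t : tSeq x y 2 ^ 3 * tSeq x y 3 ^ 3 * tSeq x y 4 = sigSeq x y 4)
    (hR4sig : ∀ j, 3 ≤ j → pcomm (sigSeq x y j) y = 1)
    (hR4tau : ∀ j, 3 ≤ j → pcomm (tauSeq x y j) x = 1)
    (hR5a : ∀ i, 3 ≤ i → i ≤ m - 1 → sigSeq x y i ≠ 1)
    (hR5b : ∀ i, m ≤ i → sigSeq x y i = 1)
    (hR6a : ∀ j, 3 ≤ j → j ≤ e + k → tauSeq x y j ≠ 1)
    (hR6b : ∀ j, e + k + 1 ≤ j → tauSeq x y j = 1)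
    (hR7sig : ∀ i, 5 ≤ i → sigSeq x y i = sSeq x y (i - 2) ^ 3)
    (hR7tau : ∀ i, 5 ≤ i → tauSeq x y i = tSeq x y (i - 2) ^ (-3 : ℤ))
    (hR8s : ∀ j, 5 ≤ j → sSeq x y j = (sigSeq x y j)⁻¹ * (sigSeq x y (j + 1))⁻¹)
    (hR8t : ∀ j, 5 ≤ j → tSeq x y j = tauSeq x y j * tauSeq x y (j + 1))
    (hR9s : pcomm (sSeq x y 3) y = sigSeq x y (m - 1) ^ (-(ρ * δ)))
    (hR9t : pcomm (tSeq x y 3) x = sigSeq x y (m - 1) ^ (-(ρ * δ)))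
    (hR10 : sSeq x y 2 ^ 3 * (sSeq x y 3 * tSeq x y 3) ^ 3 * sSeq x y 4 * tSeq x y 4 =
      sigSeq x y (m - 1) ^ (ρ * β))
    (hR11 : tauSeq x y (e + 1) = sigSeq x y (m - 1) ^ (-ρ))
    (hR12 : sSeq x y 4 * sigSeq x y 4 * sigSeq x y 5 = sigSeq x y (m - 1) ^ (ρ * β))
    (hR13 : sSeq x y 3 * sigSeq x y 3 * sigSeq x y 4 =
      sigSeq x y (m - 2) ^ (ρ * β) * sigSeq x y (m - 1) ^ γ * tauSeq x y e ^ δ)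
    (hR14 : (tSeq x y 3)⁻¹ * tauSeq x y 3 * tauSeq x y 4 =
      sigSeq x y (m - 2) ^ (ρ * δ) * sigSeq x y (m - 1) ^ α * tauSeq x y e ^ β)
    (hk0 : k = 0)
    (Ψ : MvPolynomial (Fin 2) ℤ → G)
    (hΨadd : ∀ f g, Ψ (f + g) = Ψ f * Ψ g)
    (hΨmon : ∀ i j : ℕ, Ψ (X 0 ^ i * X 1 ^ j) = wIter x y i j)
    (A : Ideal (MvPolynomial (Fin 2) ℤ))
    (hA : ∀ f, f ∈ A ↔ Ψ f = 1)
    :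
    A = Ideal.span {X 0 ^ (m - 2), X 1 ^ (e - 1), X 0 * X 1,
      X 0 ^ 2 + 3 * X 0 + 3 + 3 * X 1 + X 1 ^ 2} := by
  have hρ0 : ρ = 0 := hkrho.1 hk0
  subst hρ0 hk0
  -- The ambient multiplicative homomorphism whose values are those of `Ψ`.
  let F : Multiplicative (MvPolynomial (Fin 2) ℤ) →* G :=
    MonoidHom.mk' (fun f => Ψ f.toAdd) (fun f g => hΨadd _ _)
  have hΨsub : ∀ f g, Ψ (f - g) = Ψ f / Ψ g := fun f g =>
    F.map_div (Multiplicative.ofAdd f) (Multiplicative.ofAdd g)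
  have hΨ3 : ∀ f, Ψ (3 * f) = Ψ f ^ 3 := fun f => by
    rw [show 3 * f = f + f + f by ring, hΨadd, hΨadd, pow_succ, pow_two]
  have hs : ∀ i, Ψ (X 0 ^ i) = sSeq x y (i + 2) := fun i => by
    simpa [wIter, sSeq] using hΨmon i 0
  have ht : ∀ j, Ψ (X 1 ^ j) = tSeq x y (j + 2) := fun j => by
    simpa [wIter, tSeq] using hΨmon 0 j
  have htS : ∀ j, tSeq x y (j + 3) = pcomm (tSeq x y (j + 2)) y := fun j => by
    simp only [tSeq]
    rw [← Function.iterate_succ_apply' (fun t => pcomm t y)]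
    congr 1
  have hsigS : sigSeq x y m = pcomm (sigSeq x y (m - 1)) x := by
    obtain ⟨c, rfl⟩ : ∃ c, m = c + 4 := ⟨m - 4, by omega⟩
    simp only [sigSeq]
    rw [← Function.iterate_succ_apply' (fun t => pcomm t x)]
    congr 1
  -- The last nontrivial `σ` is central.
  have hsigc : ∀ z, Commute (sigSeq x y (m - 1)) z := by
    refine commute_of_gen hgen ?_ ?_
    · rw [← pcomm_eq_one_iff, ← hsigS]
      exact hR5b m le_rfl
    · rw [← pcomm_eq_one_iff]
      exact hR4sig _ (by omega)
  have hsm : sSeq x y m = 1 := by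
    rcases eq_or_lt_of_le hm with h | h
    · subst h
      simpa [hR5b 4 le_rfl, hR5b 5 (by norm_num)] using hR12
    · rw [hR8s m h, hR5b m le_rfl, hR5b (m + 1) (by omega)]
      simp
  have hte : tSeq x y (e + 1) = 1 := by
    rcases eq_or_lt_of_le he3 with h | h
    · -- For `e = 3` the elements `τ₃` and `σ_{m-1}` are central, hence so is `t₃`.
      have htau4 : tauSeq x y 4 = 1 := hR6b 4 (by omega)
      have htau3 : ∀ z, Commute (tauSeq x y 3) z :=
        commute_of_gen hgen (pcomm_eq_one_iff.1 (hR4tau 3 le_rfl)) (pcomm_eq_one_iff.1 htau4)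
      rw [← h, htau4] at hR14
      have h3 : tSeq x y 3 =
          tauSeq x y 3 * (sigSeq x y (m - 1) ^ α * tauSeq x y 3 ^ β)⁻¹ := by
        rw [eq_mul_inv_iff_mul_eq, eq_comm, ← inv_mul_eq_iff_eq_mul]
        simpa using hR14
      rw [← h, htS 1, pcomm_eq_one_iff, h3]
      exact (htau3 y).mul_left
        ((((hsigc y).zpow_left α).mul_left ((htau3 y).zpow_left β)).inv_left)
    · rw [hR8t (e + 1) (by omega), hR6b (e + 1) (by omega), hR6b (e + 1 + 1) (by omega), mul_one]
  have hle : relIdeal (m - 2) (e - 1) ≤ A := by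
    refine Ideal.span_le.2 ?_
    rintro f (rfl | rfl | rfl | rfl)
    · rw [SetLike.mem_coe, hA, hs, show m - 2 + 2 = m by omega, hsm]
    · rw [SetLike.mem_coe, hA, ht, show e - 1 + 2 = e + 1 by omega, hte]
    · rw [SetLike.mem_coe, hA]
      have h := hΨmon 1 1
      rw [pow_one, pow_one] at h
      rw [h, show wIter x y 1 1 = pcomm (tSeq x y 3) x from rfl, hR9t]
      simp
    · rw [SetLike.mem_coe, hA,
        show (X 0 ^ 2 + 3 * X 0 + 3 + 3 * X 1 + X 1 ^ 2 : MvPolynomial (Fin 2) ℤ) =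
          3 * X 0 ^ 0 + 3 * (X 0 ^ 1 + X 1 ^ 1) + X 0 ^ 2 + X 1 ^ 2 by ring,
        hΨadd, hΨadd, hΨadd, hΨ3, hΨ3, hΨadd, hs, hs, hs, ht, ht]
      simpa using hR10
  have hsurj : commutator G ≤ F.range := by
    refine (commutator_le_closure_wIter habel x y hgen).trans ((Subgroup.closure_le _).2 ?_)
    rintro _ ⟨⟨i, j⟩, rfl⟩
    exact ⟨Multiplicative.ofAdd (X 0 ^ i * X 1 ^ j), hΨmon i j⟩
  have hcomm : Nat.card (commutator G) = 3 ^ (n - 2) := by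
    have h := (commutator G).card_eq_card_quotient_mul_card_subgroup
    rw [hab, hcard, show n = n - 2 + 2 by omega, pow_add] at h
    omega
  obtain ⟨hfin, hcardR⟩ := card_quotient_relIdeal (m - 3) (e - 2)
  rw [show m - 3 + 1 = m - 2 by omega, show e - 2 + 1 = e - 1 by omega] at hfin hcardR
  rw [show m - 3 + (e - 2) + 1 = n - 2 by omega] at hcardR
  let q := Ideal.Quotient.factor hle
  have hq : Function.Surjective q := Ideal.Quotient.factor_surjective hle
  have hfinA := Finite.of_surjective q hq
  -- A set-theoretic section of `Ψ` embeds the commutator subgroup into `ℤ[X, Y] ⧸ A`.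
  have hcardA : 3 ^ (n - 2) ≤ Nat.card (MvPolynomial (Fin 2) ℤ ⧸ A) := by
    have hex : ∀ g : commutator G, ∃ f, Ψ f = g := fun g => hsurj g.2
    choose r hr using hex
    rw [← hcomm]
    refine Nat.card_le_card_of_injective (fun g => Ideal.Quotient.mk A (r g)) ?_
    intro g g' h
    have h1 := (hA _).1 (Ideal.Quotient.eq.1 h)
    rw [hΨsub, div_eq_one, hr, hr] at h1
    exact Subtype.ext h1
  have hbij : Function.Bijective q := hq.bijective_of_nat_card_le (hcardR.trans hcardA)
  refine le_antisymm (fun f hf => ?_) hle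
  have : q (Ideal.Quotient.mk _ f) = q 0 := by
    rw [map_zero, Ideal.Quotient.factor_mk, Ideal.Quotient.eq_zero_iff_mem]
    exact hf
  exact Ideal.Quotient.eq_zero_iff_mem.1 (hbij.1 this)
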